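/- Let α ∈ (0,1), β > 0, and λ > 0 with 2√λ cos(√λ) + (β − λ/β) sin(√λ) = 0. Define ψ(x) = sin(√λ x) + (√λ/β) cos(√λ x) and u(x,t) = ψ(x) E_α(−λ t^α) for x ∈ ℝ and t ≥ 0. Then u is a classical solution of the one-dimensional fractional diffusion equation with Robin conditions of parameter β on [0,1]: for every x ∈ [0,1] and t > 0, (1/Γ(1−α)) ∫_0^t (t−s)^(−α) ∂_s u(x,s) ds = ∂²_x u(x,t); moreover −∂_x u(0,t) + β u(0,t) = 0 and ∂_x u(1,t) + β u(1,t) = 0 for all t > 0, and u(x,0) = ψ(x) for all x ∈ [0,1]. -/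

import Mathlib

/-- The Mittag-Leffler function `E_α(x) = ∑_{k=0}^∞ x^k / Γ(αk + 1)`. -/
noncomputable def mittagLeffler (α x : ℝ) : ℝ :=
  ∑' k : ℕ, x ^ k / Real.Gamma (α * k + 1)

open MeasureTheory Set

lemma gamma_lower (R x : ℝ) (hR : 0 < R) (hx : 1 ≤ x) :
    Real.exp (-R) * R ^ (x - 1) ≤ Real.Gamma x := by
  have hc := Real.GammaIntegral_convergent (s := x) (by linarith)
  rw [Real.Gamma_eq_integral (by linarith), ← integral_exp_neg_Ioi R, ← integral_mul_const]
  have hsub : Ioi R ⊆ Ioi (0:ℝ) := Ioi_subset_Ioi hR.le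
  calc ∫ t in Ioi R, Real.exp (-t) * R ^ (x - 1)
      ≤ ∫ t in Ioi R, Real.exp (-t) * t ^ (x - 1) := by
        refine setIntegral_mono_on ?_ (hc.mono_set hsub) measurableSet_Ioi ?_
        · exact (integrableOn_exp_neg_Ioi R).mul_const _
        · intro t ht
          have : R < t := ht
          gcongr
    _ ≤ _ := by
        refine setIntegral_mono_set hc ?_ (Filter.Eventually.of_forall hsub)
        refine (ae_restrict_iff' measurableSet_Ioi).2 (Filter.Eventually.of_forall ?_)
        intro t ht
        have : 0 < t := ht
        simp only [Pi.zero_apply]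
        positivity

lemma ml_summable (α x : ℝ) (hα : 0 < α) :
    Summable (fun k : ℕ => x ^ k / Real.Gamma (α * k + 1)) := by
  set M : ℝ := 2 * (|x| + 1) with hM
  have hMpos : 0 < M := by positivity
  set R : ℝ := M ^ (1 / α) with hRdef
  have hR : 0 < R := by positivity
  have hRα : R ^ α = M := by
    rw [hRdef, ← Real.rpow_mul hMpos.le, one_div_mul_cancel hα.ne', Real.rpow_one]
  have hg : Summable (fun k : ℕ => Real.exp R * (1 / 2 : ℝ) ^ k) :=
    (summable_geometric_of_lt_one (by norm_num) (by norm_num)).mul_left _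
  refine Summable.of_norm_bounded hg fun k => ?_
  have h1 := gamma_lower R (α * k + 1) hR (by have : 0 ≤ α * k := by positivity
                                              linarith)
  have h2 : R ^ (α * k + 1 - 1) = M ^ k := by
    rw [add_sub_cancel_right, Real.rpow_mul hR.le, hRα, Real.rpow_natCast]
  rw [h2] at h1
  have hpos : 0 < Real.exp (-R) * M ^ k := by positivity
  have hG : 0 < Real.Gamma (α * k + 1) := hpos.trans_le h1
  rw [norm_div, norm_pow, Real.norm_eq_abs, Real.norm_eq_abs, abs_of_pos hG, div_le_iff₀ hG]
  calc |x| ^ k ≤ (M / 2) ^ k := by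
        gcongr
        rw [hM]; linarith
    _ = Real.exp R * (1 / 2) ^ k * (Real.exp (-R) * M ^ k) := by
        have : Real.exp R * Real.exp (-R) = 1 := by rw [← Real.exp_add]; simp
        rw [div_eq_mul_one_div, mul_pow]
        linear_combination (-(M ^ k * (1 / 2) ^ k)) * this
    _ ≤ _ := by gcongr

lemma ml_hasDerivAt (α z : ℝ) (hα : 0 < α) :
    HasDerivAt (mittagLeffler α)
      (∑' k : ℕ, ((k : ℝ) + 1) * z ^ k / Real.Gamma (α * (k + 1) + 1)) z := by
  set R : ℝ := |z| + 1 with hR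
  have hRpos : 0 < R := by positivity
  have hb : ∀ n : ℕ, ∀ y ∈ Ioo (-R) R,
      ‖(n : ℝ) * y ^ (n - 1) / Real.Gamma (α * n + 1)‖ ≤
        (2 * (R + 1)) ^ n / Real.Gamma (α * n + 1) := by
    intro n y hy
    have hG : 0 < Real.Gamma (α * n + 1) := Real.Gamma_pos_of_pos (by positivity)
    rw [norm_div, Real.norm_eq_abs (Real.Gamma _), abs_of_pos hG]
    gcongr
    rw [norm_mul, norm_pow, Real.norm_eq_abs, Real.norm_eq_abs, Nat.abs_cast, mul_pow]
    have hy' : |y| ≤ R + 1 := by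
      have := abs_lt.2 ⟨hy.1, hy.2⟩
      linarith
    have h1 : (n : ℝ) ≤ 2 ^ n := by exact_mod_cast Nat.lt_two_pow_self.le
    have h2 : |y| ^ (n - 1) ≤ (R + 1) ^ n :=
      (pow_le_pow_left₀ (abs_nonneg y) hy' _).trans
        (pow_le_pow_right₀ (by linarith) (Nat.sub_le _ _))
    gcongr
  have hz : z ∈ Ioo (-R) R := abs_lt.1 (by rw [hR]; linarith)
  have hsum := ml_summable α (2 * (R + 1)) hα
  have key := hasDerivAt_tsum_of_isPreconnected
    (g := fun (n : ℕ) (y : ℝ) => y ^ n / Real.Gamma (α * n + 1))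
    (g' := fun (n : ℕ) (y : ℝ) => (n : ℝ) * y ^ (n - 1) / Real.Gamma (α * n + 1))
    hsum (isOpen_Ioo (a := -R) (b := R)) isPreconnected_Ioo
    (fun n y _ => (hasDerivAt_pow n y).div_const _) hb hz (ml_summable α z hα) hz
  have hs : Summable fun n : ℕ => (n : ℝ) * z ^ (n - 1) / Real.Gamma (α * n + 1) :=
    Summable.of_norm_bounded hsum fun n => hb n z hz
  rw [hs.tsum_eq_zero_add] at key
  have e : mittagLeffler α = fun z => ∑' n : ℕ, z ^ n / Real.Gamma (α * n + 1) := by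
    funext z; rfl
  rw [e]
  simpa using key

lemma beta_int (a b t : ℝ) (ha : 0 < a) (hb : 0 < b) (ht : 0 < t) :
    ∫ s in (0:ℝ)..t, (t - s) ^ (b - 1) * s ^ (a - 1) =
      t ^ (a + b - 1) * (Real.Gamma a * Real.Gamma b / Real.Gamma (a + b)) := by
  have h := Complex.betaIntegral_scaled (a : ℂ) (b : ℂ) ht
  rw [Complex.betaIntegral_eq_Gamma_mul_div _ _ (by simpa) (by simpa)] at h
  have h2 : ∫ s in (0:ℝ)..t, (s : ℂ) ^ ((a : ℂ) - 1) * ((t : ℂ) - s) ^ ((b : ℂ) - 1) =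
      ∫ s in (0:ℝ)..t, (((t - s) ^ (b - 1) * s ^ (a - 1) : ℝ) : ℂ) := by
    refine intervalIntegral.integral_congr fun s hs => ?_
    rw [uIcc_of_le ht.le] at hs
    have h3 : 0 ≤ t - s := by linarith [hs.2]
    push_cast
    rw [Complex.ofReal_cpow h3, Complex.ofReal_cpow hs.1]
    push_cast
    ring
  rw [h2, intervalIntegral.integral_ofReal] at h
  have h4 : (t : ℂ) ^ ((a : ℂ) + b - 1) = ((t ^ (a + b - 1) : ℝ) : ℂ) := by
    rw [Complex.ofReal_cpow ht.le]; push_cast; rfl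
  rw [h4, ← Complex.ofReal_add, Complex.Gamma_ofReal, Complex.Gamma_ofReal,
    Complex.Gamma_ofReal] at h
  exact_mod_cast h

lemma ml_time_deriv (α lam s : ℝ) (hα : 0 < α) (hs : 0 < s) :
    HasDerivAt (fun s' => mittagLeffler α (-lam * s' ^ α))
      (∑' k : ℕ, (-lam) ^ (k + 1) / Real.Gamma (α * (k + 1)) * s ^ (α * (k + 1) - 1)) s := by
  have h1 := (ml_hasDerivAt α (-lam * s ^ α) hα).comp s
    ((Real.hasDerivAt_rpow_const (p := α) (Or.inl hs.ne')).const_mul (-lam))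
  convert! h1 using 1
  rw [← tsum_mul_right]
  refine tsum_congr fun k => ?_
  have hp : 0 < α * ((k : ℝ) + 1) := by positivity
  have hG := Real.Gamma_pos_of_pos hp
  rw [Real.Gamma_add_one hp.ne', mul_pow, ← Real.rpow_natCast (s ^ α), ← Real.rpow_mul hs.le]
  have : s ^ (α * ((k : ℝ) + 1) - 1) = s ^ (α * k) * s ^ (α - 1) := by
    rw [← Real.rpow_add hs]; congr 1; ring
  rw [this]
  field_simp
  ring

lemma caputo_ml (α lam t : ℝ) (hα : α ∈ Ioo (0:ℝ) 1) (hlam : 0 < lam) (ht : 0 < t) :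
    ∫ s in (0:ℝ)..t, (t - s) ^ (-α) * deriv (fun s' => mittagLeffler α (-lam * s' ^ α)) s =
      Real.Gamma (1 - α) * (-lam * mittagLeffler α (-lam * t ^ α)) := by
  obtain ⟨h0, h1⟩ := hα
  have hG1 : 0 < Real.Gamma (1 - α) := Real.Gamma_pos_of_pos (by linarith)
  set B : ℕ → ℝ → ℝ := fun k s => (t - s) ^ (-α) * s ^ (α * (k + 1) - 1) with hB
  set c : ℕ → ℝ := fun k => (-lam) ^ (k + 1) / Real.Gamma (α * (k + 1)) with hc
  have hGk : ∀ k : ℕ, 0 < Real.Gamma (α * (k + 1)) := fun k =>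
    Real.Gamma_pos_of_pos (by positivity)
  have hGk1 : ∀ k : ℕ, 0 < Real.Gamma (α * k + 1) := fun k =>
    Real.Gamma_pos_of_pos (by positivity)
  have hBint : ∀ k, ∫ s in Ioc 0 t, B k s =
      (t ^ α) ^ k * (Real.Gamma (α * (k + 1)) * Real.Gamma (1 - α) / Real.Gamma (α * k + 1)) := by
    intro k
    have := beta_int (α * (k + 1)) (1 - α) t (by positivity) (by linarith) ht
    rw [show α * ((k : ℝ) + 1) + (1 - α) = α * k + 1 by ring, add_sub_cancel_right,
      show (1 - α - 1) = -α by ring, Real.rpow_mul ht.le, Real.rpow_natCast] at this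
    rw [← this, intervalIntegral.integral_of_le ht.le]
  have hBpos : ∀ k, 0 < ∫ s in Ioc 0 t, B k s := by
    intro k
    rw [hBint]
    have := hGk k
    have := hGk1 k
    positivity
  have hBi : ∀ k, IntegrableOn (B k) (Ioc 0 t) := fun k =>
    Integrable.of_integral_ne_zero (hBpos k).ne'
  have hcB : ∀ k, c k * ∫ s in Ioc 0 t, B k s =
      Real.Gamma (1 - α) * (-lam) * ((-lam * t ^ α) ^ k / Real.Gamma (α * k + 1)) := by
    intro k
    rw [hBint, hc]
    have := (hGk k).ne'
    simp only
    rw [mul_pow]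
    field_simp
    ring
  have hnorm : ∀ k, ∫ s in Ioc 0 t, ‖c k * B k s‖ = ‖c k * ∫ s in Ioc 0 t, B k s‖ := by
    intro k
    rw [norm_mul, Real.norm_of_nonneg (hBpos k).le, ← integral_const_mul]
    refine setIntegral_congr_fun measurableSet_Ioc fun s hs => ?_
    have h3 : 0 ≤ t - s := by linarith [hs.2]
    have h4 : 0 ≤ s := hs.1.le
    rw [norm_mul, Real.norm_of_nonneg (r := B k s) (by simp only [hB]; positivity)]
  have hsum : Summable fun k => c k * ∫ s in Ioc 0 t, B k s := by
    simp_rw [hcB]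
    exact (ml_summable α _ h0).mul_left _
  have key := integral_tsum_of_summable_integral_norm (μ := volume.restrict (Ioc 0 t))
    (F := fun k s => c k * B k s) (fun k => (hBi k).const_mul (c k))
    (by simp_rw [hnorm]; exact hsum.norm)
  simp_rw [integral_const_mul, hcB, tsum_mul_left] at key
  rw [intervalIntegral.integral_of_le ht.le, mittagLeffler, ← mul_assoc, key]
  refine setIntegral_congr_fun measurableSet_Ioc fun s hs => ?_

  rw [(ml_time_deriv α lam s h0 hs.1).deriv, ← tsum_mul_left]
  refine tsum_congr fun k => ?_
  simp only [hB, hc]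
  ring

theorem robin_classical_solution_1d (α β lam : ℝ) (hα : α ∈ Set.Ioo (0:ℝ) 1)
    (hβ : 0 < β) (hlam : 0 < lam)
    (hroot : 2 * Real.sqrt lam * Real.cos (Real.sqrt lam) +
      (β - lam / β) * Real.sin (Real.sqrt lam) = 0)
    (ψ : ℝ → ℝ)
    (hψ : ∀ x, ψ x = Real.sin (Real.sqrt lam * x) +
      (Real.sqrt lam / β) * Real.cos (Real.sqrt lam * x))
    (u : ℝ → ℝ → ℝ)
    (hu : ∀ x t : ℝ, u x t = ψ x * mittagLeffler α (-lam * t ^ α)) :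
    (∀ x ∈ Set.Icc (0:ℝ) 1, ∀ t : ℝ, 0 < t →
      (1 / Real.Gamma (1 - α)) *
        ∫ s in (0:ℝ)..t, (t - s) ^ (-α) * deriv (fun s' => u x s') s =
      deriv (deriv (fun y => u y t)) x) ∧
    (∀ t : ℝ, 0 < t →
      -deriv (fun y => u y t) 0 + β * u 0 t = 0 ∧
      deriv (fun y => u y t) 1 + β * u 1 t = 0) ∧
    (∀ x ∈ Set.Icc (0:ℝ) 1, u x 0 = ψ x) := by
  have hsq : Real.sqrt lam ^ 2 = lam := Real.sq_sqrt hlam.le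
  set r := Real.sqrt lam with hr
  have hd : ∀ t y, HasDerivAt (fun y => u y t)
      ((r * Real.cos (r * y) - (r / β) * (r * Real.sin (r * y))) *
        mittagLeffler α (-lam * t ^ α)) y := by
    intro t y
    have hl : HasDerivAt (fun y : ℝ => r * y) r y := by
      simpa using (hasDerivAt_id y).const_mul r
    have h := ((hl.sin).add ((hl.cos).const_mul (r / β))).mul_const
      (mittagLeffler α (-lam * t ^ α))
    have e : (fun y => u y t) = fun y => (Real.sin (r * y) + (r / β) * Real.cos (r * y)) *
        mittagLeffler α (-lam * t ^ α) := by
      funext y; rw [hu, hψ]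
    rw [e]
    convert! h using 1
    ring
  have hd2 : ∀ t y, deriv (deriv (fun y => u y t)) y = -lam * u y t := by
    intro t y
    have e : deriv (fun y => u y t) = fun y =>
        ((r * Real.cos (r * y) - (r / β) * (r * Real.sin (r * y))) *
        mittagLeffler α (-lam * t ^ α)) := by
      funext y; exact (hd t y).deriv
    have hl : HasDerivAt (fun y : ℝ => r * y) r y := by
      simpa using (hasDerivAt_id y).const_mul r
    have h := (((hl.cos).const_mul r).sub (((hl.sin).const_mul r).const_mul (r / β))).mul_const
      (mittagLeffler α (-lam * t ^ α))
    rw [e]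
    refine h.deriv.trans ?_
    rw [hu, hψ]
    generalize mittagLeffler α (-lam * t ^ α) = m
    rw [← hsq]
    ring
  refine ⟨?_, ?_, ?_⟩
  · intro x _ t ht
    rw [hd2]
    have hG1 : 0 < Real.Gamma (1 - α) := Real.Gamma_pos_of_pos (by linarith [hα.2])
    have e : ∀ s, deriv (fun s' => u x s') s =
        ψ x * deriv (fun s' => mittagLeffler α (-lam * s' ^ α)) s := by
      intro s
      have : (fun s' => u x s') = fun s' => ψ x * mittagLeffler α (-lam * s' ^ α) := by
        funext s'; exact hu x s'
      rw [this, deriv_const_mul_field]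
    simp_rw [e, mul_left_comm _ (ψ x)]
    rw [intervalIntegral.integral_const_mul, caputo_ml α lam t hα hlam ht, hu]
    field_simp
  · intro t _
    rw [(hd t 0).deriv, (hd t 1).deriv, hu, hu, hψ, hψ]
    generalize mittagLeffler α (-lam * t ^ α) = m
    constructor
    · simp
      field_simp
      ring
    · rw [mul_one]
      have : 2 * r * Real.cos r + (β - r ^ 2 / β) * Real.sin r = 0 := by rw [hsq]; exact hroot
      field_simp at this ⊢
      linear_combination m * this
  · intro x _
    have h : mittagLeffler α 0 = 1 := by
      rw [mittagLeffler, tsum_eq_single 0]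
      · simp
      · intro k hk; simp [hk]
    rw [hu, Real.zero_rpow hα.1.ne', mul_zero, h, mul_one]
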